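/- Suppose K = ⌈n^{1−ε}⌉ for a constant 0 < ε < 1 and M is a fixed positive integer constant. Then, under the Uniform popularity distribution, the maximum load L of Strategy I is Θ(log n) with high probability: there exist constants c_1, c_2, c > 0 such that for all sufficiently large n, with probability at least 1 − n^{−c} (over the random placement, the random requests, and the random tie-breaking), c_1·log n ≤ L ≤ c_2·log n. -/

import Mathlib

open scoped Classical BigOperators
open Filter

/-- Nodes of the `m × m` torus grid (a `√n × √n` grid with wrap-around, `n = m²`). -/
abbrev Node (m : ℕ) := Fin m × Fin m

/-- Wrap-around distance between two coordinates in `Fin m`. -/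
def cdist {m : ℕ} (a b : Fin m) : ℕ :=
  min ((a.val + m - b.val) % m) ((b.val + m - a.val) % m)

/-- Graph (shortest-path) distance on the torus grid. -/
def torusDist {m : ℕ} (u v : Node m) : ℕ := cdist u.1 v.1 + cdist u.2 v.2

/-- A cache placement: each of the `m²` nodes fills `M` cache slots with files from a
library of `K` files.  Under the Uniform popularity distribution the random placement
is uniform over all such functions (each slot i.i.d. uniform on the `K` files). -/
abbrev Placement (m M K : ℕ) := Node m → Fin M → Fin K

/-- Node `u` has cached file `j`. -/
def cached {m M K : ℕ} (ω : Placement m M K) (u : Node m) (j : Fin K) : Prop :=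
  ∃ i, ω u i = j

/-- Probability of an event under the uniform measure on a finite type. -/
noncomputable def unifProb {Ω : Type*} [Fintype Ω] (E : Set Ω) : ℝ :=
  ((Finset.univ.filter (fun ω => ω ∈ E)).card : ℝ) / (Fintype.card Ω : ℝ)

/-- `A` assigns each of the `n'` requests (request `t` originating at node `(ρ t).1`
and asking for file `(ρ t).2`) to a nearest node that cached the requested file;
quantifying over all such `A` covers every random tie-breaking of Strategy I. -/
def validAssign {m M K n' : ℕ} (ω : Placement m M K) (ρ : Fin n' → Node m × Fin K)
    (A : Fin n' → Node m) : Prop :=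
  ∀ t, cached ω (A t) (ρ t).2 ∧
    ∀ v, cached ω v (ρ t).2 → torusDist (ρ t).1 (A t) ≤ torusDist (ρ t).1 v

/-- Maximum load: the maximum over nodes of the number of requests assigned to it. -/
noncomputable def maxLoad {m n' : ℕ} (A : Fin n' → Node m) : ℕ :=
  Finset.univ.sup fun v : Node m => (Finset.univ.filter fun t => A t = v).card

/-- Library size `K = ⌈n^(1-ε)⌉`. -/
noncomputable def Kf (ε : ℝ) (n : ℕ) : ℕ := ⌈(n : ℝ) ^ (1 - ε)⌉₊

/-!
Write `n = m ^ 2` and `L = log n`, and let `K` be at least `2` and polynomially smaller than `n`.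

*Upper bound.* With `R ^ 2` of order `K * L`, every square of side `R` contains a replica of every
file, up to probability `n ^ (-1)`. A node then only serves requests for its at most `M` files that
originate within distance `2 * R`. The number of these is binomial with mean at most
`(4 * R) ^ 2 * M / K`, of order `L`, so by a Chernoff bound no node serves more than a large
constant times `L` of them.

*Lower bound.* Fix one file and cut the torus into disjoint blocks of side `5 * r`, with
`r ^ 2 / K` of order `δ * L`. In a given block, the file has exactly one replica, lying in the
central square of side `r`, with probability at least
`r ^ 2 / K * exp (-50 * M * r ^ 2 / K)`, which is about `n ^ (-200 * M * δ)`. For small `δ` the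
polynomially many independent blocks make this happen somewhere. That replica is nearest for the
whole central square, however ties are broken, so it serves all requests for the file from there:
a binomial number with mean `r ^ 2 / K`.
-/

open MeasureTheory ProbabilityTheory Finset

section UniformMeasure

lemma unifProb_eq_uniformOn_real {Ω : Type*} [Fintype Ω] [MeasurableSpace Ω]
    [MeasurableSingletonClass Ω] (E : Set Ω) :
    unifProb E = (uniformOn (Set.univ : Set Ω)).real E := by
  have hE : ({ω | ω ∈ E} : Finset Ω) = E.toFinset := by ext ω; simp
  rw [unifProb, hE, measureReal_def, uniformOn_univ, ENNReal.toReal_div,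
    Measure.count_apply E.toFinite.measurableSet, ← Set.coe_toFinset E,
    Set.encard_coe_eq_coe_finsetCard]
  simp

lemma uniformOn_univ_real {Ω : Type*} [Fintype Ω] [MeasurableSpace Ω]
    [MeasurableSingletonClass Ω] (s : Finset Ω) :
    (uniformOn (Set.univ : Set Ω)).real s = #s / Fintype.card Ω := by
  rw [← unifProb_eq_uniformOn_real, unifProb]
  simp

lemma uniformOn_univ_pi (ι : Type*) {α : Type*} [Fintype ι] [Finite α] [MeasurableSpace α]
    [MeasurableSingletonClass α] :
    uniformOn (Set.univ : Set (ι → α)) = Measure.pi fun _ => uniformOn Set.univ := by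
  rw [← Set.pi_univ Set.univ, uniformOn_pi]

lemma uniformOn_univ_prod (α β : Type*) [Finite α] [Finite β] [MeasurableSpace α]
    [MeasurableSpace β] [MeasurableSingletonClass α] [MeasurableSingletonClass β] :
    uniformOn (Set.univ : Set (α × β)) = (uniformOn Set.univ).prod (uniformOn Set.univ) := by
  have := Fintype.ofFinite α
  have := Fintype.ofFinite β
  refine Measure.ext_of_singleton fun x => ?_
  rw [← Set.singleton_prod_singleton, Measure.prod_prod]
  simp [uniformOn_univ, ENNReal.mul_inv]

end UniformMeasure

lemma prod_real_le_add_of_section_le {α β : Type*} [MeasurableSpace α] [MeasurableSpace β]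
    {μ : Measure α} {ν : Measure β} [IsProbabilityMeasure μ]
    [IsProbabilityMeasure ν] {T : Set (α × β)} (hT : MeasurableSet T) {G : Set α} {d : ℝ}
    (hd : 0 ≤ d) (h : ∀ a ∈ G, ν.real (Prod.mk a ⁻¹' T) ≤ d) :
    (μ.prod ν).real T ≤ μ.real Gᶜ + d := by
  refine ENNReal.toReal_le_of_le_ofReal (by positivity) ?_
  have hsection (a : α) : ν (Prod.mk a ⁻¹' T) ≤ Gᶜ.indicator 1 a + ENNReal.ofReal d := by
    by_cases ha : a ∈ G
    · simpa [ha, ENNReal.le_ofReal_iff_toReal_le (measure_ne_top _ _) hd, measureReal_def]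
        using h a ha
    · simpa [ha] using prob_le_one.trans le_self_add
  calc (μ.prod ν) T = ∫⁻ a, ν (Prod.mk a ⁻¹' T) ∂μ := Measure.prod_apply hT
    _ ≤ ∫⁻ a, (Gᶜ.indicator 1 a + ENNReal.ofReal d) ∂μ := lintegral_mono hsection
    _ ≤ μ Gᶜ + ENNReal.ofReal d := by
      rw [lintegral_add_right _ measurable_const, lintegral_const, measure_univ, mul_one]
      gcongr
      exact lintegral_indicator_one_le _
    _ = ENNReal.ofReal (μ.real Gᶜ + d) := by
      rw [ENNReal.ofReal_add measureReal_nonneg hd, ofReal_measureReal]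

section SoleHit

variable {ι α : Type*}

/-- The configurations whose values hit `S` at exactly one index of `B`, that index lying in
`C`. -/
def soleHit (S : Set α) (B C : Finset ι) : Set (ι → α) :=
  {ω | ∃ v ∈ C, ω v ∈ S ∧ ∀ w ∈ B, w ≠ v → ω w ∉ S}

lemma dependsOn_mem_soleHit {B C : Finset ι} (hCB : C ⊆ B) (S : Set α) :
    DependsOn (· ∈ soleHit S B C) (B : Set ι) := by
  intro ω ω' h
  refine propext (exists_congr fun v => and_congr_right fun hv => ?_)
  rw [h v (hCB hv)]
  exact and_congr_right fun _ => forall₂_congr fun w hw => by rw [h w hw]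

end SoleHit

section ProductMeasure

variable {ι α : Type*} [Fintype ι] [MeasurableSpace α] {ν : Measure α} [IsProbabilityMeasure ν]

lemma mgf_card_filter_mem {S : Set α} (hS : MeasurableSet S) (t : ℝ) :
    mgf (fun ω : ι → α => (#{i | ω i ∈ S} : ℝ)) (Measure.pi fun _ => ν) t =
      (1 + (Real.exp t - 1) * ν.real S) ^ Fintype.card ι := by
  have hprod (ω : ι → α) : Real.exp (t * #{i | ω i ∈ S}) =
      ∏ i, (1 + S.indicator (fun _ => Real.exp t - 1) (ω i)) := by
    simp only [Set.indicator_apply, add_ite, add_sub_cancel, add_zero, prod_ite, prod_const,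
      one_pow, one_mul, ← Real.exp_nat_mul, mul_comm]
  simp only [mgf, hprod]
  rw [integral_fintype_prod_eq_pow fun a => 1 + S.indicator (fun _ => Real.exp t - 1) a,
    integral_add (integrable_const _) ((integrable_const _).indicator hS), integral_indicator hS]
  simp [mul_comm]

lemma mgf_card_filter_mem_le {S : Set α} (hS : MeasurableSet S) (t : ℝ) :
    mgf (fun ω : ι → α => (#{i | ω i ∈ S} : ℝ)) (Measure.pi fun _ => ν) t ≤
      Real.exp (Fintype.card ι * ν.real S * (Real.exp t - 1)) := by
  have hp : ν.real S ≤ 1 := measureReal_le_one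
  have hbase : 0 ≤ 1 + (Real.exp t - 1) * ν.real S := by
    nlinarith [mul_nonneg (Real.exp_pos t).le (measureReal_nonneg (μ := ν) (s := S))]
  rw [mgf_card_filter_mem hS, mul_assoc, Real.exp_nat_mul, mul_comm (ν.real S), add_comm]
  rw [add_comm] at hbase
  exact pow_le_pow_left₀ hbase (Real.add_one_le_exp _) _

lemma measurable_card_filter_mem {S : Set α} (hS : MeasurableSet S) :
    Measurable fun ω : ι → α => (#{i | ω i ∈ S} : ℝ) := by
  simp only [card_filter, Nat.cast_sum, Nat.cast_ite, Nat.cast_one, Nat.cast_zero]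
  exact Finset.measurable_sum _ fun i _ =>
    Measurable.ite (measurable_pi_apply i hS) measurable_const measurable_const

lemma integrable_exp_mul_card_filter_mem {S : Set α} (hS : MeasurableSet S) (t : ℝ) :
    Integrable (fun ω : ι → α => Real.exp (t * #{i | ω i ∈ S})) (Measure.pi fun _ => ν) := by
  refine .of_bound (((measurable_card_filter_mem hS).const_mul t).exp.aestronglyMeasurable)
    (Real.exp (|t| * Fintype.card ι)) (.of_forall fun ω => ?_)
  rw [Real.norm_eq_abs, Real.abs_exp]
  gcongr
  · exact le_abs_self t
  · exact_mod_cast card_le_univ _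

lemma pi_real_le_card_filter_mem_le {S : Set α} (hS : MeasurableSet S) (a : ℝ) :
    (Measure.pi fun _ => ν).real {ω : ι → α | a ≤ #{i | ω i ∈ S}} ≤
      Real.exp (Fintype.card ι * ν.real S - a * Real.log 2) := by
  have h := measure_ge_le_exp_mul_mgf a (Real.log_nonneg one_le_two)
    (integrable_exp_mul_card_filter_mem (ι := ι) (ν := ν) hS (Real.log 2))
  refine h.trans ((mul_le_mul_of_nonneg_left (mgf_card_filter_mem_le hS _)
    (Real.exp_pos _).le).trans_eq ?_)
  rw [← Real.exp_add, Real.exp_log two_pos]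
  ring_nf

lemma pi_real_card_filter_mem_le_le {S : Set α} (hS : MeasurableSet S) (a : ℝ) :
    (Measure.pi fun _ => ν).real {ω : ι → α | #{i | ω i ∈ S} ≤ a} ≤
      Real.exp (a * Real.log 2 - Fintype.card ι * ν.real S / 2) := by
  have h := measure_le_le_exp_mul_mgf a (neg_nonpos.mpr (Real.log_nonneg one_le_two))
    (integrable_exp_mul_card_filter_mem (ι := ι) (ν := ν) hS (-Real.log 2))
  refine h.trans ((mul_le_mul_of_nonneg_left (mgf_card_filter_mem_le hS _)
    (Real.exp_pos _).le).trans_eq ?_)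
  rw [← Real.exp_add, Real.exp_neg, Real.exp_log two_pos]
  ring_nf

lemma pi_real_forall_mem (S : Set α) (B : Finset ι) :
    (Measure.pi fun _ => ν).real {ω : ι → α | ∀ i ∈ B, ω i ∈ S} = ν.real S ^ #B := by
  have h : {ω : ι → α | ∀ i ∈ B, ω i ∈ S} = (B : Set ι).pi fun _ => S := rfl
  rw [h, measureReal_def, Measure.pi_pi_finset, prod_const, ENNReal.toReal_pow, measureReal_def]

lemma pi_real_inter_of_dependsOn [Finite α] [DiscreteMeasurableSpace α] {S T : Finset ι}
    (hST : Disjoint S T) {E F : Set (ι → α)} (hE : DependsOn (· ∈ E) (S : Set ι))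
    (hF : DependsOn (· ∈ F) (T : Set ι)) :
    (Measure.pi fun _ => ν).real (E ∩ F) =
      (Measure.pi fun _ => ν).real E * (Measure.pi fun _ => ν).real F := by
  obtain ⟨E', hE'⟩ := dependsOn_iff_exists_comp.mp hE
  obtain ⟨F', hF'⟩ := dependsOn_iff_exists_comp.mp hF
  have hind := (iIndepFun_pi (μ := fun _ : ι => ν) (X := fun _ => id)
    fun _ => aemeasurable_id).indepFun_finset S T hST (fun i => measurable_pi_apply i)
  have hpreE : E = (fun ω (i : S) => ω i) ⁻¹' {x | E' x} := Set.ext fun ω => (congrFun hE' ω).to_iff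
  have hpreF : F = (fun ω (i : T) => ω i) ⁻¹' {x | F' x} := Set.ext fun ω => (congrFun hF' ω).to_iff
  rw [hpreE, hpreF]
  simp only [measureReal_def, ← ENNReal.toReal_mul]
  congr 1
  exact hind.measure_inter_preimage_eq_mul _ _ .of_discrete .of_discrete

lemma pi_real_soleHit {S : Set α} (hS : MeasurableSet S) {B C : Finset ι} (hCB : C ⊆ B) :
    (Measure.pi fun _ => ν).real (soleHit S B C) =
      #C * (ν.real S * (1 - ν.real S) ^ (#B - 1)) := by
  let E (v : ι) : Set (ι → α) := (B : Set ι).pi fun w => if w = v then S else Sᶜ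
  have mem_E {v : ι} (hv : v ∈ C) (ω : ι → α) :
      ω ∈ E v ↔ ω v ∈ S ∧ ∀ w ∈ B, w ≠ v → ω w ∉ S := by
    refine ⟨fun h => ⟨by simpa using h v (hCB hv), fun w hw hwv => ?_⟩, fun h w hw => ?_⟩
    · simpa [hwv] using h w hw
    · by_cases hwv : w = v
      · simpa [hwv] using h.1
      · simpa [hwv] using h.2 w hw hwv
  have hunion : soleHit S B C = ⋃ v ∈ C, E v := by
    ext ω
    simp only [soleHit, Set.mem_iUnion₂, Set.mem_ofPred_eq, exists_prop]
    exact exists_congr fun v => and_congr_right fun hv => (mem_E hv ω).symm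
  have hdisj : (C : Set ι).PairwiseDisjoint E := fun v hv w hw hvw =>
    Set.disjoint_left.mpr fun ω hωv hωw =>
      ((mem_E hv ω).mp hωv).2 w (hCB hw) hvw.symm ((mem_E hw ω).mp hωw).1
  have hmeas (v : ι) : MeasurableSet (E v) :=
    .pi B.countable_toSet fun w _ => by split_ifs; exacts [hS, hS.compl]
  have hE (v : ι) (hv : v ∈ C) :
      (Measure.pi fun _ => ν).real (E v) = ν.real S * (1 - ν.real S) ^ (#B - 1) := by
    rw [measureReal_def, Measure.pi_pi_finset, ENNReal.toReal_prod,
      ← mul_prod_erase B _ (hCB hv), if_pos rfl, ← card_erase_of_mem (hCB hv), ← prod_const,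
      ← probReal_compl_eq_one_sub hS]
    exact congrArg _ (prod_congr rfl fun w hw => by rw [if_neg (ne_of_mem_erase hw)]; rfl)
  rw [hunion, measureReal_biUnion_finset hdisj fun v _ => hmeas v, sum_congr rfl hE, sum_const,
    nsmul_eq_mul]

lemma pi_real_forall_notMem_soleHit_le [Finite α] [DiscreteMeasurableSpace α] {κ : Type*}
    (S : Set α) (T : Finset κ) {B C : κ → Finset ι} (hCB : ∀ b, C b ⊆ B b)
    (hB : Pairwise fun b c => Disjoint (B b) (B c)) {p : ℝ}
    (hp : ∀ b, p ≤ (Measure.pi fun _ => ν).real (soleHit S (B b) (C b))) :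
    (Measure.pi fun _ => ν).real {ω | ∀ b ∈ T, ω ∉ soleHit S (B b) (C b)} ≤
      Real.exp (-(#T * p)) := by
  induction T using Finset.induction_on with
  | empty => simp
  | insert b T hb ih =>
    have hinter : {ω : ι → α | ∀ c ∈ insert b T, ω ∉ soleHit S (B c) (C c)} =
        (soleHit S (B b) (C b))ᶜ ∩ {ω | ∀ c ∈ T, ω ∉ soleHit S (B c) (C c)} := by
      ext ω; simp
    have hdisj : Disjoint (B b) (T.biUnion B) := by
      rw [disjoint_biUnion_right]
      exact fun c hc => hB (ne_of_mem_of_not_mem hc hb).symm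
    have hb_dep : DependsOn (· ∈ (soleHit S (B b) (C b))ᶜ) (B b : Set ι) := fun ω ω' h =>
      congrArg Not (dependsOn_mem_soleHit (hCB b) S h)
    have hT_dep : DependsOn (· ∈ {ω : ι → α | ∀ c ∈ T, ω ∉ soleHit S (B c) (C c)})
        (T.biUnion B : Set ι) := fun ω ω' h =>
      propext <| forall₂_congr fun c hc => not_congr <| Eq.to_iff <|
        dependsOn_mem_soleHit (hCB c) S fun i hi => h i (by simpa using ⟨c, hc, hi⟩)
    rw [hinter, pi_real_inter_of_dependsOn hdisj hb_dep hT_dep, card_insert_of_notMem hb,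
      Nat.cast_succ, add_one_mul, neg_add_rev, Real.exp_add,
      probReal_compl_eq_one_sub .of_discrete]
    exact mul_le_mul ((sub_le_sub_left (hp b) 1).trans (Real.one_sub_le_exp_neg p)) ih
      measureReal_nonneg (Real.exp_pos _).le

end ProductMeasure

section TorusGeometry

variable {m : ℕ}

lemma cdist_eq_min_val_sub (a b : Fin m) : cdist a b = min (a - b).val (b - a).val := by
  have hsub (x y : Fin m) : (x - y).val = (x.val + m - y.val) % m := by
    rw [Fin.val_sub]
    congr 1
    omega
  rw [hsub, hsub, cdist]

lemma cdist_eq_min_ite (a b : Fin m) :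
    cdist a b = min (if b ≤ a then a.val - b.val else a.val + m - b.val)
      (if a ≤ b then b.val - a.val else b.val + m - a.val) := by
  rw [cdist_eq_min_val_sub]
  have h₁ := Fin.intCast_val_sub_eq_sub_add_ite a b
  have h₂ := Fin.intCast_val_sub_eq_sub_add_ite b a
  split_ifs at * <;> omega

lemma card_filter_val_lt_le {α : Type*} [Fintype α] {f : α → Fin m} (hf : Function.Injective f)
    (D : ℕ) : #{x | (f x).val < D} ≤ D := by
  simpa using card_le_card_of_injOn (t := range D) (fun x => (f x).val)
    (fun x hx => by simpa using hx) (Fin.val_injective.comp hf).injOn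

/-- The points of the cycle `Fin m` that are reached from `a` by between `lo` and
`lo + len - 1` forward steps. -/
def arc (a : Fin m) (lo len : ℕ) : Finset (Fin m) :=
  {x | lo ≤ (x - a).val ∧ (x - a).val < lo + len}

lemma mem_arc {a x : Fin m} {lo len : ℕ} :
    x ∈ arc a lo len ↔ lo ≤ (x - a).val ∧ (x - a).val < lo + len := by
  simp [arc]

lemma arc_subset_arc_zero (a : Fin m) {lo len s : ℕ} (h : lo + len ≤ s) :
    arc a lo len ⊆ arc a 0 s := by
  intro x hx
  rw [mem_arc] at hx ⊢
  omega

/-- The square of side `len` in the torus whose lower corner is `a` shifted by `(lo, lo)`. -/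
def torusBox (a : Node m) (lo len : ℕ) : Finset (Node m) := arc a.1 lo len ×ˢ arc a.2 lo len

lemma mem_torusBox {a u : Node m} {lo len : ℕ} :
    u ∈ torusBox a lo len ↔ u.1 ∈ arc a.1 lo len ∧ u.2 ∈ arc a.2 lo len := mem_product

lemma torusBox_subset_torusBox_zero (a : Node m) {lo len s : ℕ} (h : lo + len ≤ s) :
    torusBox a lo len ⊆ torusBox a 0 s :=
  product_subset_product (arc_subset_arc_zero _ h) (arc_subset_arc_zero _ h)

variable [NeZero m]

lemma cdist_sub_right (x y a : Fin m) : cdist (x - a) (y - a) = cdist x y := by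
  simp only [cdist_eq_min_val_sub, sub_sub_sub_cancel_right]

lemma card_filter_cdist_lt_le (b : Fin m) (D : ℕ) : #{x | cdist x b < D} ≤ 2 * D :=
  calc #{x | cdist x b < D}
      ≤ #(({x | (x - b).val < D} : Finset (Fin m)) ∪ ({x | (b - x).val < D} : Finset (Fin m))) :=
        card_le_card fun x hx => by simpa [cdist_eq_min_val_sub] using hx
    _ ≤ D + D := (card_union_le _ _).trans (add_le_add
        (card_filter_val_lt_le sub_left_injective D) (card_filter_val_lt_le sub_right_injective D))
    _ = 2 * D := (two_mul D).symm

lemma card_arc (a : Fin m) {lo len : ℕ} (h : lo + len ≤ m) : #(arc a lo len) = len := by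
  have hcard : #(arc a lo len) = #(Finset.Ico lo (lo + len)) := by
    refine card_bij (fun x _ => (x - a).val) (fun x hx => by simpa [mem_arc] using hx)
      (fun x _ y _ hxy => sub_left_injective (Fin.val_injective hxy)) fun k hk => ?_
    rw [Finset.mem_Ico] at hk
    exact ⟨⟨k, by omega⟩ + a, by simpa [mem_arc] using hk, by simp⟩
  simpa using hcard

lemma cdist_lt_of_mem_arc {a x y : Fin m} {lo len : ℕ} (hx : x ∈ arc a lo len)
    (hy : y ∈ arc a lo len) : cdist x y < len := by
  rw [mem_arc] at hx hy
  rw [← cdist_sub_right x y a, cdist_eq_min_ite]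
  split_ifs <;> omega

lemma le_cdist_of_notMem_arc {a x y : Fin m} {k lo len s : ℕ} (hlo : k ≤ lo)
    (hs : lo + len + k ≤ s) (hx : x ∈ arc a lo len) (hy : y ∉ arc a 0 s) : k ≤ cdist x y := by
  rw [mem_arc] at hx hy
  have := (y - a).isLt
  rw [← cdist_sub_right x y a, cdist_eq_min_ite]
  split_ifs <;> omega

lemma val_div_of_mem_arc_ofNat {s i : ℕ} (hi : i < m / s) {x : Fin m}
    (hx : x ∈ arc (Fin.ofNat m (i * s)) 0 s) : x.val / s = i := by
  have his : (i + 1) * s ≤ m := (Nat.mul_le_mul_right s hi).trans (Nat.div_mul_le_self m s)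
  rw [add_one_mul] at his
  rw [mem_arc] at hx
  have hs : 0 < s := by omega
  have hval : (Fin.ofNat m (i * s)).val = i * s := Nat.mod_eq_of_lt (by omega)
  have hsub := Fin.intCast_val_sub_eq_sub_add_ite x (Fin.ofNat m (i * s))
  refine Nat.div_eq_of_lt_le ?_ ?_
  · split_ifs at hsub <;> omega
  · rw [add_one_mul]
    split_ifs at hsub <;> omega

lemma card_torusBox (a : Node m) {lo len : ℕ} (h : lo + len ≤ m) :
    #(torusBox a lo len) = len ^ 2 := by
  rw [torusBox, card_product, card_arc _ h, card_arc _ h, sq]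

lemma torusDist_lt_of_mem_torusBox {a u v : Node m} {lo len : ℕ} (hu : u ∈ torusBox a lo len)
    (hv : v ∈ torusBox a lo len) : torusDist u v < 2 * len := by
  rw [mem_torusBox] at hu hv
  have h₁ := cdist_lt_of_mem_arc hu.1 hv.1
  have h₂ := cdist_lt_of_mem_arc hu.2 hv.2
  rw [torusDist]
  omega

lemma torusDist_lt_of_mem_torusBox_zero {u w : Node m} {R : ℕ} (hw : w ∈ torusBox u 0 R) :
    torusDist u w < 2 * R := by
  have hR : 0 < R := by have := mem_arc.mp (mem_torusBox.mp hw).1; omega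
  exact torusDist_lt_of_mem_torusBox (mem_torusBox.mpr (by simpa [mem_arc] using hR)) hw

lemma le_torusDist_of_notMem_torusBox {a u w : Node m} {k lo len s : ℕ} (hlo : k ≤ lo)
    (hs : lo + len + k ≤ s) (hu : u ∈ torusBox a lo len) (hw : w ∉ torusBox a 0 s) :
    k ≤ torusDist u w := by
  rw [mem_torusBox] at hu
  rw [mem_torusBox, not_and_or] at hw
  rcases hw with hw | hw
  · exact (le_cdist_of_notMem_arc hlo hs hu.1 hw).trans (Nat.le_add_right _ _)
  · exact (le_cdist_of_notMem_arc hlo hs hu.2 hw).trans (Nat.le_add_left _ _)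

lemma card_filter_torusDist_lt_le (v : Node m) (D : ℕ) :
    #{u | torusDist u v < D} ≤ (2 * D) ^ 2 :=
  calc #{u | torusDist u v < D}
      ≤ #(({x | cdist x v.1 < D} : Finset (Fin m)) ×ˢ ({x | cdist x v.2 < D} : Finset (Fin m))) :=
        card_le_card fun u hu => by
          rw [mem_filter_univ, torusDist] at hu
          simp only [mem_product, mem_filter_univ]
          exact ⟨by omega, by omega⟩
    _ ≤ 2 * D * (2 * D) := by
        rw [card_product]
        exact Nat.mul_le_mul (card_filter_cdist_lt_le _ D) (card_filter_cdist_lt_le _ D)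
    _ = (2 * D) ^ 2 := (sq _).symm

/-- The `b`-th block of the partial tiling of the torus by disjoint squares of side `5 * r`. The
side is chosen so that two nodes of the central square of side `r` are closer to each other than
to any node outside the block. -/
def block (m r : ℕ) [NeZero m] (b : Fin (m / (5 * r)) × Fin (m / (5 * r))) : Finset (Node m) :=
  torusBox (Fin.ofNat m (b.1 * (5 * r)), Fin.ofNat m (b.2 * (5 * r))) 0 (5 * r)

/-- The central square of side `r` of `block m r b`. -/
def blockCenter (m r : ℕ) [NeZero m] (b : Fin (m / (5 * r)) × Fin (m / (5 * r))) :
    Finset (Node m) :=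
  torusBox (Fin.ofNat m (b.1 * (5 * r)), Fin.ofNat m (b.2 * (5 * r))) (2 * r) r

variable {r : ℕ}

lemma blockCenter_subset_block (b : Fin (m / (5 * r)) × Fin (m / (5 * r))) :
    blockCenter m r b ⊆ block m r b := torusBox_subset_torusBox_zero _ (by omega)

lemma pairwise_disjoint_block :
    Pairwise fun b c : Fin (m / (5 * r)) × Fin (m / (5 * r)) =>
      Disjoint (block m r b) (block m r c) := by
  refine fun b c hbc => Finset.disjoint_left.mpr fun u hb hc => hbc ?_
  rw [block, mem_torusBox] at hb hc
  ext
  · rw [← val_div_of_mem_arc_ofNat b.1.isLt hb.1, ← val_div_of_mem_arc_ofNat c.1.isLt hc.1]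
  · rw [← val_div_of_mem_arc_ofNat b.2.isLt hb.2, ← val_div_of_mem_arc_ofNat c.2.isLt hc.2]

lemma card_block (hr : 5 * r ≤ m) (b : Fin (m / (5 * r)) × Fin (m / (5 * r))) :
    #(block m r b) = 25 * r ^ 2 := by
  rw [block, card_torusBox _ (by omega)]
  ring

lemma card_blockCenter (hr : 5 * r ≤ m) (b : Fin (m / (5 * r)) × Fin (m / (5 * r))) :
    #(blockCenter m r b) = r ^ 2 := card_torusBox _ (by omega)

lemma torusDist_lt_of_mem_blockCenter {b : Fin (m / (5 * r)) × Fin (m / (5 * r))} {u v w : Node m}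
    (hu : u ∈ blockCenter m r b) (hv : v ∈ blockCenter m r b) (hw : w ∉ block m r b) :
    torusDist u v < torusDist u w :=
  (torusDist_lt_of_mem_torusBox hu hv).trans_le
    (le_torusDist_of_notMem_torusBox le_rfl (by omega) hu hw)

end TorusGeometry

section NearestReplica

variable {m M K n : ℕ}

/-- The cache contents, with `M` slots, that contain file `j`. -/
def cachesWith (M : ℕ) (j : Fin K) : Set (Fin M → Fin K) := {f | ∃ i, f i = j}

lemma cached_iff_mem_cachesWith {ω : Placement m M K} {u : Node m} {j : Fin K} :
    cached ω u j ↔ ω u ∈ cachesWith M j := Iff.rfl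

/-- The requests that `v` can serve under the placement `ω` if no request travels a distance of
`D` or more. -/
noncomputable def servableRequests (ω : Placement m M K) (D : ℕ) (v : Node m) :
    Finset (Node m × Fin K) :=
  ({u | torusDist u v < D} : Finset (Node m)) ×ˢ univ.image (ω v)

lemma card_servableRequests_le [NeZero m] (ω : Placement m M K) (D : ℕ) (v : Node m) :
    #(servableRequests ω D v) ≤ (2 * D) ^ 2 * M := by
  rw [servableRequests, card_product]
  exact Nat.mul_le_mul (card_filter_torusDist_lt_le v D) (card_image_le.trans (by simp))

lemma exists_validAssign {ω : Placement m M K} (h : ∀ j, ∃ w, cached ω w j)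
    (ρ : Fin n → Node m × Fin K) : ∃ A, validAssign ω ρ A := by
  have hnearest (t : Fin n) : ∃ a, cached ω a (ρ t).2 ∧
      ∀ v, cached ω v (ρ t).2 → torusDist (ρ t).1 a ≤ torusDist (ρ t).1 v :=
    Set.exists_min_image {v | cached ω v (ρ t).2} _ (Set.toFinite _) (h (ρ t).2)
  choose A hA using hnearest
  exact ⟨A, hA⟩

variable {ω : Placement m M K} {ρ : Fin n → Node m × Fin K} {A : Fin n → Node m}

lemma maxLoad_le_of_card_servableRequests_le [NeZero m] (hA : validAssign ω ρ A) {D : ℕ}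
    (hD : ∀ u j, ∃ w, cached ω w j ∧ torusDist u w < D) {a : ℝ}
    (ha : ∀ v, (#{t | ρ t ∈ servableRequests ω D v} : ℝ) ≤ a) : (maxLoad A : ℝ) ≤ a := by
  obtain ⟨v, -, hv⟩ := exists_mem_eq_sup univ univ_nonempty fun v : Node m => #{t | A t = v}
  refine le_trans ?_ (ha v)
  rw [maxLoad, hv]
  refine Nat.cast_le.mpr (card_le_card fun t ht => ?_)
  obtain rfl : A t = v := by simpa using ht
  obtain ⟨w, hw, hwD⟩ := hD (ρ t).1 (ρ t).2
  obtain ⟨⟨i, hi⟩, hmin⟩ := hA t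
  simpa [servableRequests] using ⟨(hmin w hw).trans_lt hwD, i, hi⟩

lemma card_le_maxLoad_of_mem_soleHit [NeZero m] (hA : validAssign ω ρ A) {r : ℕ} {j : Fin K}
    {b : Fin (m / (5 * r)) × Fin (m / (5 * r))}
    (hω : ω ∈ soleHit (cachesWith M j) (block m r b) (blockCenter m r b)) :
    #{t | ρ t ∈ blockCenter m r b ×ˢ {j}} ≤ maxLoad A := by
  obtain ⟨v, hv, hvj, hsole⟩ := hω
  calc #{t | ρ t ∈ blockCenter m r b ×ˢ {j}} ≤ #{t | A t = v} := card_le_card fun t ht => ?_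
    _ ≤ maxLoad A := le_sup (f := fun v : Node m => #{t | A t = v}) (mem_univ v)
  simp only [mem_filter_univ, mem_product, mem_singleton] at ht ⊢
  obtain ⟨hcenter, rfl⟩ := ht
  obtain ⟨hAt, hmin⟩ := hA t
  have hblock : A t ∈ block m r b := by
    by_contra hout
    exact (hmin v hvj).not_gt (torusDist_lt_of_mem_blockCenter hcenter hv hout)
  by_contra hne
  exact hsole (A t) hblock hne hAt

end NearestReplica

section EventProbabilities

variable {m M K : ℕ}

lemma uniformOn_real_compl_cachesWith [NeZero K] (M : ℕ) (j : Fin K) :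
    (uniformOn Set.univ).real (cachesWith M j)ᶜ = (1 - 1 / K : ℝ) ^ M := by
  have hset : (cachesWith M j)ᶜ = {f : Fin M → Fin K | ∀ i ∈ univ, f i ∈ ({j}ᶜ : Set (Fin K))} := by
    ext f; simp [cachesWith]
  have hj : (uniformOn Set.univ).real ({j} : Set (Fin K)) = 1 / K := by
    simpa using uniformOn_univ_real {j}
  rw [hset, uniformOn_univ_pi, pi_real_forall_mem, probReal_compl_eq_one_sub .of_discrete, hj,
    card_univ, Fintype.card_fin]

lemma uniformOn_real_compl_cachesWith_le [NeZero K] (M : ℕ) (j : Fin K) :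
    (uniformOn Set.univ).real (cachesWith M j)ᶜ ≤ Real.exp (-(M / K)) := by
  have hK : (1 : ℝ) ≤ K := by exact_mod_cast NeZero.one_le
  rw [uniformOn_real_compl_cachesWith]
  calc (1 - 1 / K : ℝ) ^ M ≤ Real.exp (-(1 / K)) ^ M :=
        pow_le_pow_left₀ (sub_nonneg.mpr (div_le_one_of_le₀ hK (by positivity)))
          (Real.one_sub_le_exp_neg _) M
    _ = Real.exp (-(M / K)) := by rw [← Real.exp_nat_mul]; ring_nf

lemma exp_neg_two_mul_le_one_sub {x : ℝ} (hx₀ : 0 ≤ x) (hx : x ≤ 1 / 2) :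
    Real.exp (-(2 * x)) ≤ 1 - x := by
  rw [Real.exp_neg, inv_le_iff_one_le_mul₀ (Real.exp_pos _)]
  calc 1 ≤ (1 - x) * (2 * x + 1) := by nlinarith
    _ ≤ (1 - x) * Real.exp (2 * x) := by
      gcongr
      · linarith
      · exact Real.add_one_le_exp _

lemma exp_le_uniformOn_real_compl_cachesWith (hK : 2 ≤ K) (M : ℕ) (j : Fin K) :
    Real.exp (-(2 * M / K)) ≤ (uniformOn Set.univ).real (cachesWith M j)ᶜ := by
  have : NeZero K := ⟨by omega⟩
  have hK : (2 : ℝ) ≤ K := by exact_mod_cast hK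
  rw [uniformOn_real_compl_cachesWith]
  calc Real.exp (-(2 * M / K)) = Real.exp (-(2 * (1 / K))) ^ M := by
        rw [← Real.exp_nat_mul]; ring_nf
    _ ≤ (1 - 1 / K : ℝ) ^ M := pow_le_pow_left₀ (Real.exp_pos _).le
        (exp_neg_two_mul_le_one_sub (by positivity) (one_div_le_one_div_of_le two_pos hK)) M

lemma one_div_le_uniformOn_real_cachesWith [NeZero K] (hM : 1 ≤ M) (j : Fin K) :
    (1 / K : ℝ) ≤ (uniformOn Set.univ).real (cachesWith M j) := by
  have hK : (1 : ℝ) ≤ K := by exact_mod_cast NeZero.one_le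
  have hpow : (1 - 1 / K : ℝ) ^ M ≤ 1 - 1 / K :=
    pow_le_of_le_one (sub_nonneg.mpr (div_le_one_of_le₀ hK (by positivity)))
      (sub_le_self _ (by positivity)) (by omega)
  rw [← uniformOn_real_compl_cachesWith M j, probReal_compl_eq_one_sub .of_discrete] at hpow
  linarith

variable [NeZero m] [NeZero K]

lemma uniformOn_real_exists_uncovered_le {R : ℕ} (hR : R ≤ m) :
    (uniformOn Set.univ).real
        {ω : Placement m M K | ∃ u j, ∀ w ∈ torusBox u 0 R, ¬ cached ω w j} ≤
      m ^ 2 * K * Real.exp (-(M * R ^ 2 / K)) := by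
  have hbox (x : Node m × Fin K) : (uniformOn Set.univ).real
      {ω : Placement m M K | ∀ w ∈ torusBox x.1 0 R, ω w ∈ (cachesWith M x.2)ᶜ} ≤
        Real.exp (-(M * R ^ 2 / K)) := by
    rw [uniformOn_univ_pi, pi_real_forall_mem, card_torusBox _ (by omega)]
    refine (pow_le_pow_left₀ measureReal_nonneg
      (uniformOn_real_compl_cachesWith_le M x.2) _).trans_eq ?_
    rw [← Real.exp_nat_mul]
    push_cast
    ring_nf
  have hunion : {ω : Placement m M K | ∃ u j, ∀ w ∈ torusBox u 0 R, ¬ cached ω w j} =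
      ⋃ x ∈ (univ : Finset (Node m × Fin K)),
        {ω | ∀ w ∈ torusBox x.1 0 R, ω w ∈ (cachesWith M x.2)ᶜ} := by
    ext ω
    simp [cached_iff_mem_cachesWith]
  rw [hunion]
  refine (measureReal_biUnion_finset_le _ _).trans ((sum_le_sum fun x _ => hbox x).trans_eq ?_)
  simp [sq]

lemma uniformOn_real_forall_notMem_soleHit_le (hK : 2 ≤ K) (hM : 1 ≤ M) (j : Fin K) {r : ℕ}
    (hr : 5 * r ≤ m) :
    (uniformOn Set.univ).real
        {ω : Placement m M K |
          ∀ b, ω ∉ soleHit (cachesWith M j) (block m r b) (blockCenter m r b)} ≤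
      Real.exp (-((m / (5 * r) : ℕ) ^ 2 * (r ^ 2 / K * Real.exp (-(50 * M * r ^ 2 / K))))) := by
  set p : ℝ := r ^ 2 / K * Real.exp (-(50 * M * r ^ 2 / K)) with hp
  have hblock (b : Fin (m / (5 * r)) × Fin (m / (5 * r))) :
      p ≤ (Measure.pi fun _ : Node m => uniformOn (Set.univ : Set (Fin M → Fin K))).real
        (soleHit (cachesWith M j) (block m r b) (blockCenter m r b)) := by
    rw [pi_real_soleHit .of_discrete (blockCenter_subset_block b), card_block hr,
      card_blockCenter hr, ← probReal_compl_eq_one_sub .of_discrete, hp, div_mul_eq_mul_div,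
      mul_div_assoc, Nat.cast_pow]
    gcongr
    calc Real.exp (-(50 * M * r ^ 2 / K)) / K
        = 1 / K * Real.exp (-(2 * M / K)) ^ (25 * r ^ 2) := by
          rw [← Real.exp_nat_mul]; push_cast; ring_nf
      _ ≤ (uniformOn Set.univ).real (cachesWith M j) *
          (uniformOn Set.univ).real (cachesWith M j)ᶜ ^ (25 * r ^ 2) := by
          gcongr
          · exact one_div_le_uniformOn_real_cachesWith hM j
          · exact exp_le_uniformOn_real_compl_cachesWith hK M j
      _ ≤ _ := mul_le_mul_of_nonneg_left
          (pow_le_pow_of_le_one measureReal_nonneg measureReal_le_one (Nat.sub_le _ _))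
          measureReal_nonneg
  have h := pi_real_forall_notMem_soleHit_le (cachesWith M j) univ
    blockCenter_subset_block pairwise_disjoint_block hblock
  simpa [uniformOn_univ_pi (Node m), sq] using h

lemma card_mul_uniformOn_real_finset (S : Finset (Node m × Fin K)) :
    Fintype.card (Fin (m ^ 2)) * (uniformOn Set.univ).real (S : Set (Node m × Fin K)) =
      (#S / K : ℝ) := by
  have hm : (m : ℝ) ≠ 0 := NeZero.ne _
  have hK : (K : ℝ) ≠ 0 := NeZero.ne _
  rw [uniformOn_univ_real]
  simp only [Fintype.card_prod, Fintype.card_fin]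
  push_cast
  field_simp

lemma uniformOn_real_le_card_filter_mem_le (S : Finset (Node m × Fin K)) (a : ℝ) :
    (uniformOn Set.univ).real {ρ : Fin (m ^ 2) → Node m × Fin K | a ≤ #{t | ρ t ∈ S}} ≤
      Real.exp (#S / K - a * Real.log 2) := by
  rw [uniformOn_univ_pi, ← card_mul_uniformOn_real_finset]
  simpa only [mem_coe] using
    pi_real_le_card_filter_mem_le (ι := Fin (m ^ 2)) S.measurableSet a

lemma uniformOn_real_card_filter_mem_le_le (S : Finset (Node m × Fin K)) (a : ℝ) :
    (uniformOn Set.univ).real {ρ : Fin (m ^ 2) → Node m × Fin K | #{t | ρ t ∈ S} ≤ a} ≤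
      Real.exp (a * Real.log 2 - #S / K / 2) := by
  rw [uniformOn_univ_pi, ← card_mul_uniformOn_real_finset]
  simpa only [mem_coe] using
    pi_real_card_filter_mem_le_le (ι := Fin (m ^ 2)) S.measurableSet a

lemma uniformOn_real_exists_le_card_servableRequests_le (ω : Placement m M K) (D : ℕ) (a : ℝ) :
    (uniformOn Set.univ).real
        {ρ : Fin (m ^ 2) → Node m × Fin K | ∃ v, a ≤ #{t | ρ t ∈ servableRequests ω D v}} ≤
      m ^ 2 * Real.exp ((2 * D) ^ 2 * M / K - a * Real.log 2) := by
  have hnode (v : Node m) : (uniformOn Set.univ).real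
      {ρ : Fin (m ^ 2) → Node m × Fin K | a ≤ #{t | ρ t ∈ servableRequests ω D v}} ≤
        Real.exp ((2 * D) ^ 2 * M / K - a * Real.log 2) := by
    refine (uniformOn_real_le_card_filter_mem_le _ a).trans ?_
    gcongr
    exact_mod_cast card_servableRequests_le ω D v
  have hunion : {ρ : Fin (m ^ 2) → Node m × Fin K | ∃ v, a ≤ #{t | ρ t ∈ servableRequests ω D v}} =
      ⋃ v ∈ (univ : Finset (Node m)), {ρ | a ≤ #{t | ρ t ∈ servableRequests ω D v}} := by
    ext ρ
    simp
  rw [hunion]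
  refine (measureReal_biUnion_finset_le _ _).trans ((sum_le_sum fun v _ => hnode v).trans_eq ?_)
  simp [sq]

end EventProbabilities

section LoadBounds

variable {m M K r R : ℕ}

/-- The event that Strategy I can serve all requests and that, however it breaks ties, its
maximum load lies in `[a₁, a₂]`. -/
def loadBetween (m M K : ℕ) (a₁ a₂ : ℝ) :
    Set (Placement m M K × (Fin (m ^ 2) → Node m × Fin K)) :=
  {x | (∃ A, validAssign x.1 x.2 A) ∧
    ∀ A, validAssign x.1 x.2 A → a₁ ≤ (maxLoad A : ℝ) ∧ (maxLoad A : ℝ) ≤ a₂}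

/-- The placements for which every file is cached within every square `torusBox u 0 R`, and for
which some block has a single replica of file `j`, located in its centre. -/
def goodPlacements (m M : ℕ) [NeZero m] (r R : ℕ) (j : Fin K) : Set (Placement m M K) :=
  {ω | (∀ u j', ∃ w ∈ torusBox u 0 R, cached ω w j') ∧
    ∃ b, ω ∈ soleHit (cachesWith M j) (block m r b) (blockCenter m r b)}

variable [NeZero m]

lemma mem_loadBetween {j : Fin K} {b : Fin (m / (5 * r)) × Fin (m / (5 * r))} {a₁ a₂ : ℝ}
    {ω : Placement m M K} {ρ : Fin (m ^ 2) → Node m × Fin K}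
    (hcover : ∀ u j', ∃ w ∈ torusBox u 0 R, cached ω w j')
    (hsole : ω ∈ soleHit (cachesWith M j) (block m r b) (blockCenter m r b))
    (h₁ : a₁ ≤ #{t | ρ t ∈ blockCenter m r b ×ˢ {j}})
    (h₂ : ∀ v, (#{t | ρ t ∈ servableRequests ω (2 * R) v} : ℝ) ≤ a₂) :
    (ω, ρ) ∈ loadBetween m M K a₁ a₂ := by
  have hnear (u : Node m) (j' : Fin K) : ∃ w, cached ω w j' ∧ torusDist u w < 2 * R :=
    let ⟨w, hw, hwj⟩ := hcover u j'
    ⟨w, hwj, torusDist_lt_of_mem_torusBox_zero hw⟩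
  refine ⟨exists_validAssign (fun j' => (hnear 0 j').imp fun _ => And.left) ρ, fun A hA => ⟨?_, ?_⟩⟩
  · exact h₁.trans (Nat.cast_le.mpr (card_le_maxLoad_of_mem_soleHit hA hsole))
  · exact maxLoad_le_of_card_servableRequests_le hA hnear h₂

lemma uniformOn_real_compl_goodPlacements_le (hK : 2 ≤ K) (hM : 1 ≤ M) (hr : 5 * r ≤ m)
    (hR : R ≤ m) (j : Fin K) :
    (uniformOn Set.univ).real (goodPlacements m M r R j)ᶜ ≤
      m ^ 2 * K * Real.exp (-(M * R ^ 2 / K)) +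
        Real.exp (-((m / (5 * r) : ℕ) ^ 2 * (r ^ 2 / K * Real.exp (-(50 * M * r ^ 2 / K))))) := by
  have : NeZero K := ⟨by omega⟩
  refine le_trans ?_ (add_le_add (uniformOn_real_exists_uncovered_le hR)
    (uniformOn_real_forall_notMem_soleHit_le hK hM j hr))
  refine (measureReal_mono fun ω hω => ?_).trans (measureReal_union_le _ _)
  refine (not_and_or.mp hω).imp (fun hcover => ?_) not_exists.mp
  push Not at hcover
  exact hcover

lemma uniformOn_real_section_compl_loadBetween_le [NeZero K] (hr : 5 * r ≤ m) {j : Fin K}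
    {ω : Placement m M K} (hω : ω ∈ goodPlacements m M r R j) (a₁ a₂ : ℝ) :
    (uniformOn Set.univ).real (Prod.mk ω ⁻¹' (loadBetween m M K a₁ a₂)ᶜ) ≤
      Real.exp (a₁ * Real.log 2 - r ^ 2 / K / 2) +
        m ^ 2 * Real.exp (16 * R ^ 2 * M / K - a₂ * Real.log 2) := by
  obtain ⟨hcover, b, hsole⟩ := hω
  have hlow := uniformOn_real_card_filter_mem_le_le (blockCenter m r b ×ˢ {j}) a₁
  have hhigh := uniformOn_real_exists_le_card_servableRequests_le ω (2 * R) a₂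
  rw [card_product, card_blockCenter hr, card_singleton, mul_one, Nat.cast_pow] at hlow
  rw [show (2 * ((2 * R : ℕ) : ℝ)) ^ 2 = 16 * R ^ 2 by push_cast; ring] at hhigh
  refine le_trans ?_ (add_le_add hlow hhigh)
  refine (measureReal_mono fun ρ hρ => ?_).trans (measureReal_union_le _ _)
  by_contra hout
  simp only [Set.mem_union, Set.mem_ofPred_eq, not_or, not_exists, not_le] at hout
  exact hρ (mem_loadBetween hcover hsole hout.1.le fun v => (hout.2 v).le)

lemma one_sub_le_unifProb_loadBetween (hK : 2 ≤ K) (hM : 1 ≤ M) (hr : 5 * r ≤ m) (hR : R ≤ m)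
    (a₁ a₂ : ℝ) :
    1 - ((m ^ 2 * K * Real.exp (-(M * R ^ 2 / K)) +
        Real.exp (-((m / (5 * r) : ℕ) ^ 2 * (r ^ 2 / K * Real.exp (-(50 * M * r ^ 2 / K)))))) +
      (Real.exp (a₁ * Real.log 2 - r ^ 2 / K / 2) +
        m ^ 2 * Real.exp (16 * R ^ 2 * M / K - a₂ * Real.log 2))) ≤
      unifProb (loadBetween m M K a₁ a₂) := by
  have : NeZero K := ⟨by omega⟩
  rw [unifProb_eq_uniformOn_real, sub_le_comm, ← probReal_compl_eq_one_sub .of_discrete,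
    uniformOn_univ_prod]
  exact (prod_real_le_add_of_section_le .of_discrete (by positivity) fun ω hω =>
    uniformOn_real_section_compl_loadBetween_le hr hω a₁ a₂).trans
      (add_le_add_left (uniformOn_real_compl_goodPlacements_le hK hM hr hR 0) _)

end LoadBounds

section Estimates

lemma exists_nat_le_sq_le {y : ℝ} (hy : 1 ≤ y) : ∃ r : ℕ, y ≤ r ^ 2 ∧ (r ^ 2 : ℝ) ≤ 4 * y := by
  have hsqrt : 1 ≤ √y := Real.one_le_sqrt.mpr hy
  have hsq : √y ^ 2 = y := Real.sq_sqrt (by linarith)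
  have hle := Nat.le_ceil √y
  have hlt := Nat.ceil_lt_add_one (Real.sqrt_nonneg y)
  exact ⟨⌈√y⌉₊, by nlinarith, by nlinarith⟩

lemma div_two_mul_le_natDiv {a b : ℕ} (hb : 0 < b) (hba : b ≤ a) :
    (a / (2 * b) : ℝ) ≤ (a / b : ℕ) := by
  have hfloor : a < 2 * (a / b) * b := by
    have hdiv := Nat.lt_div_mul_add (a := a) hb
    have hone : 1 * b ≤ a / b * b := Nat.mul_le_mul_right b (Nat.div_pos hba hb)
    rw [mul_assoc]
    omega
  rw [div_le_iff₀ (by positivity)]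
  calc (a : ℝ) ≤ 2 * (a / b : ℕ) * b := by exact_mod_cast hfloor.le
    _ = (a / b : ℕ) * (2 * b) := by ring

lemma four_mul_exp_neg_le {x : ℝ} (hx : 2 ≤ x) :
    4 * Real.exp (-(2 * x)) ≤ Real.exp (-x) := by
  have h4 : 4 ≤ Real.exp x := by
    nlinarith [Real.quadratic_le_exp_of_nonneg (by linarith : 0 ≤ x)]
  calc 4 * Real.exp (-(2 * x)) ≤ Real.exp x * Real.exp (-(2 * x)) := by gcongr
    _ = Real.exp (-x) := by rw [← Real.exp_add]; ring_nf

variable {L M K δ : ℝ}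

lemma uncovered_term_le {R : ℝ} (hK : 0 < K) (hKL : K ≤ Real.exp L) (hM : 1 ≤ M)
    (hR : 3 * (K * L) ≤ R ^ 2) :
    Real.exp L * K * Real.exp (-(M * R ^ 2 / K)) ≤ Real.exp (-L) := by
  have hexp : 3 * L ≤ M * R ^ 2 / K := by
    rw [le_div_iff₀ hK]
    nlinarith
  calc Real.exp L * K * Real.exp (-(M * R ^ 2 / K))
      ≤ Real.exp L * Real.exp L * Real.exp (-(3 * L)) := by gcongr
    _ = Real.exp (-L) := by rw [← Real.exp_add, ← Real.exp_add]; ring_nf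

lemma high_load_term_le {R : ℝ} (hK : 0 < K) (hL : 0 ≤ L) (hM : 1 ≤ M)
    (hR : R ^ 2 ≤ 12 * (K * L)) :
    Real.exp L * Real.exp (16 * R ^ 2 * M / K - 300 * M * L * Real.log 2) ≤ Real.exp (-L) := by
  have hexp : 16 * R ^ 2 * M / K ≤ 192 * (M * L) := by
    rw [div_le_iff₀ hK]
    nlinarith
  have hML : L ≤ M * L := le_mul_of_one_le_left hL hM
  rw [← Real.exp_add, Real.exp_le_exp]
  nlinarith [Real.log_two_gt_d9]

lemma low_load_term_le {r : ℝ} (hK : 0 < K) (hδL : 0 ≤ δ * L) (hr : δ * (K * L) ≤ r ^ 2) :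
    Real.exp (δ / 4 * L * Real.log 2 - r ^ 2 / K / 2) ≤ Real.exp (-(δ / 4 * L)) := by
  have hexp : δ * L ≤ r ^ 2 / K := by
    rw [le_div_iff₀ hK]
    linarith
  rw [Real.exp_le_exp]
  nlinarith [Real.log_two_lt_d9]

lemma block_term_le {m r : ℕ} (hm : Real.exp L = m ^ 2) (hK : 0 < K) (hM : 0 ≤ M) (hr₀ : 0 < r)
    (hrm : 5 * r ≤ m) (hr : (r ^ 2 : ℝ) ≤ 4 * (δ * (K * L)))
    (hKL : 100 * K * L ≤ Real.exp ((1 - 200 * M * δ) * L)) :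
    Real.exp (-((m / (5 * r) : ℕ) ^ 2 * (r ^ 2 / K * Real.exp (-(50 * M * r ^ 2 / K))))) ≤
      Real.exp (-L) := by
  have hblocks : (m / (10 * r) : ℝ) ≤ (m / (5 * r) : ℕ) := by
    convert div_two_mul_le_natDiv (show 0 < 5 * r by omega) hrm using 2
    push_cast
    ring
  have hexp : 50 * M * r ^ 2 / K ≤ 200 * M * δ * L := by
    rw [div_le_iff₀ hK]
    nlinarith
  rw [Real.exp_le_exp, neg_le_neg_iff]
  calc L ≤ Real.exp ((1 - 200 * M * δ) * L) / (100 * K) := by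
        rw [le_div_iff₀ (by positivity)]
        linarith
    _ = (m / (10 * r)) ^ 2 * (r ^ 2 / K * Real.exp (-(200 * M * δ * L))) := by
        rw [show (1 - 200 * M * δ) * L = L + -(200 * M * δ * L) by ring, Real.exp_add, hm]
        field_simp
        ring
    _ ≤ (m / (5 * r) : ℕ) ^ 2 * (r ^ 2 / K * Real.exp (-(50 * M * r ^ 2 / K))) := by gcongr

end Estimates

lemma one_sub_exp_le_unifProb_loadBetween {m M K : ℕ} {L δ : ℝ} (hm : Real.exp L = m ^ 2)
    (hM : 1 ≤ M) (hK : 2 ≤ K) (hδ₀ : 0 < δ) (hδ₁ : δ ≤ 1) (hδL : 16 ≤ δ * L)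
    (hKL : 100 * K * L ≤ Real.exp ((1 - 200 * M * δ) * L)) :
    1 - Real.exp (-(δ / 8 * L)) ≤ unifProb (loadBetween m M K (δ / 4 * L) (300 * M * L)) := by
  have hM' : (1 : ℝ) ≤ M := by exact_mod_cast hM
  have hK' : (2 : ℝ) ≤ K := by exact_mod_cast hK
  have hL : 16 ≤ L := by nlinarith
  have hKLm : 100 * K * L ≤ m ^ 2 := by
    refine hm ▸ hKL.trans (Real.exp_le_exp.mpr ?_)
    nlinarith [show 0 ≤ 200 * M * δ * L by positivity]
  obtain ⟨r, hr, hr'⟩ := exists_nat_le_sq_le (y := δ * (K * L)) (by nlinarith)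
  obtain ⟨R, hR, hR'⟩ := exists_nat_le_sq_le (y := 3 * (K * L)) (by nlinarith)
  have hrm : 5 * r ≤ m := by
    have : ((5 * r : ℕ) : ℝ) ^ 2 ≤ m ^ 2 := by push_cast; nlinarith
    exact_mod_cast (pow_le_pow_iff_left₀ (by positivity) (by positivity) two_ne_zero).mp this
  have hRm : R ≤ m := by
    have : (R : ℝ) ^ 2 ≤ m ^ 2 := by nlinarith
    exact_mod_cast (pow_le_pow_iff_left₀ (by positivity) (by positivity) two_ne_zero).mp this
  have hr₀ : 0 < r := by
    rcases Nat.eq_zero_or_pos r with rfl | h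
    · norm_num at hr; nlinarith
    · exact h
  have : NeZero m := ⟨by omega⟩
  have hcover := uncovered_term_le (by linarith) (by nlinarith) hM' hR
  have hblock := block_term_le hm (by linarith) (by linarith) hr₀ hrm hr' hKL
  have hlow := low_load_term_le (by linarith) (by linarith) hr
  have hhigh := high_load_term_le (K := K) (L := L) (R := R) (by linarith) (by linarith) hM'
    (by linarith)
  have hweak : Real.exp (-L) ≤ Real.exp (-(δ / 4 * L)) := Real.exp_le_exp.mpr (by nlinarith)
  have hfour := four_mul_exp_neg_le (x := δ / 8 * L) (by linarith)
  rw [show 2 * (δ / 8 * L) = δ / 4 * L by ring] at hfour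
  rw [hm] at hcover hhigh
  have h := one_sub_le_unifProb_loadBetween hK hM hrm hRm (δ / 4 * L) (300 * M * L)
  linarith

lemma eventually_mul_le_exp (C : ℝ) {β : ℝ} (hβ : 0 < β) :
    ∀ᶠ L in atTop, C * L ≤ Real.exp (β * L) := by
  have h := ((isLittleO_pow_exp_pos_mul_atTop 1 hβ).const_mul_left C).bound one_pos
  filter_upwards [h] with L hL
  simpa using (le_abs_self _).trans (by simpa using hL)

theorem statement2_general (α C : ℝ) (hα : α < 1) (M : ℕ) (hM : 1 ≤ M) :
    ∃ c₁ c₂ c : ℝ, 0 < c₁ ∧ 0 < c₂ ∧ 0 < c ∧ ∃ N : ℕ, ∀ m : ℕ, N ≤ m →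
      ∀ K : ℕ, 2 ≤ K → (K : ℝ) ≤ C * ((m ^ 2 : ℕ) : ℝ) ^ α →
        1 - ((m ^ 2 : ℕ) : ℝ) ^ (-c) ≤
          unifProb (loadBetween m M K (c₁ * Real.log ((m ^ 2 : ℕ) : ℝ))
            (c₂ * Real.log ((m ^ 2 : ℕ) : ℝ))) := by
  set δ := min 1 ((1 - α) / (400 * M))
  have hδ₀ : 0 < δ := lt_min one_pos (div_pos (sub_pos.mpr hα) (by positivity))
  have hδα : 200 * M * δ ≤ (1 - α) / 2 := by
    have := (le_div_iff₀ (by positivity)).mp (min_le_right 1 ((1 - α) / (400 * M)))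
    linarith
  have hlog : Tendsto (fun m : ℕ => Real.log ((m ^ 2 : ℕ) : ℝ)) atTop atTop :=
    Real.tendsto_log_atTop.comp
      (tendsto_natCast_atTop_atTop.comp (tendsto_pow_atTop two_ne_zero))
  obtain ⟨N, hN⟩ := eventually_atTop.mp <| (eventually_ge_atTop 1).and <| hlog.eventually <|
    (eventually_ge_atTop (16 / δ)).and
      (eventually_mul_le_exp (100 * C) (half_pos (sub_pos.mpr hα)))
  refine ⟨δ / 4, 300 * M, δ / 8, by positivity, by positivity, by positivity, N,
    fun m hm K hK hKC => ?_⟩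
  obtain ⟨hm₁, hδL, hCL⟩ := hN m hm
  have hm₀ : 0 < ((m ^ 2 : ℕ) : ℝ) := by positivity
  set L := Real.log ((m ^ 2 : ℕ) : ℝ)
  have hL : 0 ≤ L := (by positivity : 0 ≤ 16 / δ).trans hδL
  rw [Real.rpow_def_of_pos hm₀] at hKC ⊢
  rw [show L * -(δ / 8) = -(δ / 8 * L) by ring]
  refine one_sub_exp_le_unifProb_loadBetween ((Real.exp_log hm₀).trans (Nat.cast_pow m 2)) hM hK hδ₀
    (min_le_left _ _) ((div_le_iff₀' hδ₀).mp hδL) ?_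
  calc 100 * K * L ≤ 100 * (C * Real.exp (L * α)) * L := by gcongr
    _ = Real.exp (L * α) * (100 * C * L) := by ring
    _ ≤ Real.exp (L * α) * Real.exp ((1 - α) / 2 * L) := by gcongr
    _ ≤ Real.exp ((1 - 200 * M * δ) * L) := by
      rw [← Real.exp_add, Real.exp_le_exp]
      nlinarith

lemma two_le_Kf {ε : ℝ} (hε : ε < 1) {n : ℕ} (hn : 2 ≤ n) : 2 ≤ Kf ε n := by
  have hpow : 1 < (n : ℝ) ^ (1 - ε) :=
    Real.one_lt_rpow (by exact_mod_cast hn) (sub_pos.mpr hε)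
  exact Nat.lt_ceil.mpr (by exact_mod_cast hpow)

lemma Kf_le_two_mul_rpow {ε : ℝ} (hε : ε ≤ 1) {n : ℕ} (hn : 1 ≤ n) :
    (Kf ε n : ℝ) ≤ 2 * (n : ℝ) ^ (1 - ε) := by
  have hpow : 1 ≤ (n : ℝ) ^ (1 - ε) :=
    Real.one_le_rpow (by exact_mod_cast hn) (sub_nonneg.mpr hε)
  have hceil := Nat.ceil_lt_add_one (zero_le_one.trans hpow)
  rw [Kf]
  linarith

/-- With `K = ⌈n^(1-ε)⌉` (`0 < ε < 1` constant), `M` a fixed positive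
integer and Uniform popularity, the maximum load of Strategy I (nearest replica) is
`Θ(log n)` with high probability over the random placement, the `n` random requests
(uniform origin, uniform file) and the random tie-breaking. -/
theorem statement2 (ε : ℝ) (hε0 : 0 < ε) (hε1 : ε < 1) (M : ℕ) (hM : 1 ≤ M) :
    ∃ c₁ c₂ c : ℝ, 0 < c₁ ∧ 0 < c₂ ∧ 0 < c ∧ ∃ N : ℕ, ∀ m : ℕ, N ≤ m →
      1 - (((m ^ 2 : ℕ) : ℝ)) ^ (-c) ≤
        unifProb {x : Placement m M (Kf ε (m ^ 2)) ×
            (Fin (m ^ 2) → Node m × Fin (Kf ε (m ^ 2))) |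
          (∃ A, validAssign x.1 x.2 A) ∧
          ∀ A, validAssign x.1 x.2 A →
            c₁ * Real.log ((m ^ 2 : ℕ) : ℝ) ≤ (maxLoad A : ℝ) ∧
            (maxLoad A : ℝ) ≤ c₂ * Real.log ((m ^ 2 : ℕ) : ℝ)} := by
  obtain ⟨c₁, c₂, c, hc₁, hc₂, hc, N, hN⟩ := statement2_general (1 - ε) 2 (by linarith) M hM
  refine ⟨c₁, c₂, c, hc₁, hc₂, hc, max N 2, fun m hm => ?_⟩
  have hm₂ : 2 ≤ m ^ 2 := (le_max_right N 2).trans (hm.trans (Nat.le_self_pow two_ne_zero m))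
  exact hN m ((le_max_left N 2).trans hm) _ (two_le_Kf hε1 hm₂)
    (Kf_le_two_mul_rpow hε1.le (one_le_two.trans hm₂))
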